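/- arXiv:2512.16632 — 2 statements merged into one kernel-verified Lean document; each statement's English description precedes it below -/
import Mathlib

section
/- Let S be a positive-definite n×n real matrix and D_1, D_2 arbitrary n×n real matrices. Suppose E_1, E_2 : (0, δ) → M_n(ℝ) satisfy E_i(h) = S h + D_i h² + o(h²) as h → 0⁺ (i = 1, 2). Then (1/h) · (log det E_1(h) − log det E_2(h)) → trace(S^{-1} (D_1 − D_2)) as h → 0⁺. -/
open Matrix Asymptotics Filter

attribute [local instance] Matrix.normedAddCommGroup Matrix.normedSpace

/-! Dividing by `h` turns `E h = h • S + h ^ 2 • D + o(h ^ 2)` into the statement that the curve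
`h ↦ h⁻¹ • E h`, extended by `S` at `0`, has derivative `D` there. By Jacobi's formula, `log |det|`
of this curve has derivative `trace (S⁻¹ * D)` at `0`. In the difference for two such curves with
the same `S`, both the values at `0` and the contributions of the scalar factor `h⁻¹` cancel. -/

open scoped Topology

section JacobiFormula

variable {m : Type*} [Fintype m] [DecidableEq m]

lemma sum_det_updateRow {R : Type*} [CommRing R] (A B : Matrix m m R) :
    ∑ i, (A.updateRow i (B i)).det = trace (A.adjugate * B) := by
  rw [trace_mul_comm]
  refine Finset.sum_congr rfl fun i _ => ?_
  rw [← cramer_transpose_apply, cramer_eq_adjugate_mulVec, ← adjugate_transpose, mulVec_transpose,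
    diag_apply, mul_apply_eq_vecMul]

/-- The determinant as a continuous multilinear function of the rows, the form in which Mathlib's
derivative of multilinear maps applies to it. -/
def detContinuousMultilinear (m R : Type*) [Fintype m] [DecidableEq m] [CommRing R]
    [TopologicalSpace R] [IsTopologicalRing R] :
    ContinuousMultilinearMap R (fun _ : m => m → R) R where
  toMultilinearMap := detRowAlternating.toMultilinearMap
  cont := continuous_id.matrix_det

lemma hasDerivWithinAt_det {𝕜 : Type*} [NontriviallyNormedField 𝕜] {A : 𝕜 → Matrix m m 𝕜}
    {A' : Matrix m m 𝕜} {s : Set 𝕜} {x : 𝕜} (hA : HasDerivWithinAt A A' s x) :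
    HasDerivWithinAt (fun t => (A t).det) (trace ((A x).adjugate * A')) s x := by
  have hdet := ((detContinuousMultilinear m 𝕜).hasFDerivAt (A x)).comp_hasDerivWithinAt x hA
  exact hdet.congr_deriv <|
    ((detContinuousMultilinear m 𝕜).linearDeriv_apply (A x) A').trans (sum_det_updateRow (A x) A')

lemma hasDerivWithinAt_log_abs_det {A : ℝ → Matrix m m ℝ} {A' : Matrix m m ℝ} {s : Set ℝ} {x : ℝ}
    (hA : HasDerivWithinAt A A' s x) (hx : IsUnit (A x)) :
    HasDerivWithinAt (fun t => Real.log |(A t).det|) (trace ((A x)⁻¹ * A')) s x := by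
  have hdet : (A x).det ≠ 0 := ((isUnit_iff_isUnit_det _).mp hx).ne_zero
  simp only [Real.log_abs]
  refine ((hasDerivWithinAt_det hA).log hdet).congr_deriv ?_
  rw [inv_def, Ring.inverse_eq_inv', smul_mul, trace_smul, smul_eq_mul, div_eq_inv_mul]

end JacobiFormula

lemma hasDerivWithinAt_update_inv_smul {𝕜 V : Type*} [NontriviallyNormedField 𝕜]
    [DecidableEq 𝕜] [NormedAddCommGroup V] [NormedSpace 𝕜 V] {f : 𝕜 → V} {a b : V} {s : Set 𝕜}
    (hf : (fun h => f h - h • a - h ^ 2 • b) =o[𝓝[s] 0] fun h => h ^ 2) :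
    HasDerivWithinAt (Function.update (fun h => h⁻¹ • f h) 0 a) b s 0 := by
  rw [hasDerivWithinAt_iff_isLittleO]
  refine ((isBigO_refl (fun h : 𝕜 => h⁻¹) _).smul_isLittleO hf).congr (fun h => ?_) fun h => ?_
  · rcases eq_or_ne h 0 with rfl | hh
    · simp
    · rw [Function.update_of_ne hh, Function.update_self, smul_sub, smul_sub, inv_smul_smul₀ hh,
        smul_smul, sq, inv_mul_cancel_left₀ hh, sub_zero]
  · rcases eq_or_ne h 0 with rfl | hh
    · simp
    · rw [smul_eq_mul, sq, inv_mul_cancel_left₀ hh, sub_zero]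

section LogDetRate

variable {m : Type*} [Fintype m] [DecidableEq m]

lemma eventually_det_ne_zero {𝕜 : Type*} [NontriviallyNormedField 𝕜] {s : Set 𝕜} (hs : 0 ∉ s)
    {S D : Matrix m m 𝕜} (hS : IsUnit S) {E : 𝕜 → Matrix m m 𝕜}
    (hE : (fun h => E h - h • S - h ^ 2 • D) =o[𝓝[s] 0] fun h => h ^ 2) :
    ∀ᶠ h in 𝓝[s] 0, (E h).det ≠ 0 := by
  classical
  have hdet : S.det ≠ 0 := ((isUnit_iff_isUnit_det S).mp hS).ne_zero
  have hcont := (hasDerivWithinAt_det (hasDerivWithinAt_update_inv_smul hE)).continuousWithinAt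
  have hne := hcont.eventually_ne (b₂ := 0) (by simpa only [Function.update_self] using hdet)
  filter_upwards [hne, self_mem_nhdsWithin] with h hh hhs hzero
  rw [Function.update_of_ne (ne_of_mem_of_not_mem hhs hs), det_smul, hzero, mul_zero] at hh
  exact hh rfl

lemma tendsto_log_abs_det_inv_smul_sub_div {s : Set ℝ} (hs : 0 ∉ s)
    {S D : Matrix m m ℝ} (hS : IsUnit S) {E : ℝ → Matrix m m ℝ}
    (hE : (fun h => E h - h • S - h ^ 2 • D) =o[𝓝[s] 0] fun h => h ^ 2) :
    Tendsto (fun h => (Real.log |(h⁻¹ • E h).det| - Real.log |S.det|) / h)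
      (𝓝[s] 0) (𝓝 (trace (S⁻¹ * D))) := by
  have hderiv := hasDerivWithinAt_log_abs_det (hasDerivWithinAt_update_inv_smul hE)
    (by rwa [Function.update_self])
  rw [hasDerivWithinAt_iff_tendsto_slope' hs, Function.update_self] at hderiv
  refine hderiv.congr' ?_
  filter_upwards [self_mem_nhdsWithin] with h hh
  rw [slope_def_field, Function.update_self, Function.update_of_ne (ne_of_mem_of_not_mem hh hs),
    sub_zero]

lemma log_abs_det_smul {c : ℝ} (hc : c ≠ 0) {A : Matrix m m ℝ} (hA : A.det ≠ 0) :
    Real.log |(c • A).det| = Fintype.card m * Real.log |c| + Real.log |A.det| := by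
  simp only [Real.log_abs, det_smul]
  rw [Real.log_mul (pow_ne_zero _ hc) hA, Real.log_pow]

theorem logdet_ratio_rate_general {s : Set ℝ} (hs : 0 ∉ s) (S D₁ D₂ : Matrix m m ℝ)
    (hS : IsUnit S) (E₁ E₂ : ℝ → Matrix m m ℝ)
    (h₁ : (fun h => E₁ h - h • S - h ^ 2 • D₁) =o[𝓝[s] 0] fun h => h ^ 2)
    (h₂ : (fun h => E₂ h - h • S - h ^ 2 • D₂) =o[𝓝[s] 0] fun h => h ^ 2) :
    Tendsto (fun h => (Real.log |(E₁ h).det| - Real.log |(E₂ h).det|) / h)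
      (𝓝[s] 0) (𝓝 (trace (S⁻¹ * (D₁ - D₂)))) := by
  have hlim := (tendsto_log_abs_det_inv_smul_sub_div hs hS h₁).sub
    (tendsto_log_abs_det_inv_smul_sub_div hs hS h₂)
  rw [← trace_sub, ← mul_sub] at hlim
  refine hlim.congr' ?_
  filter_upwards [eventually_det_ne_zero hs hS h₁, eventually_det_ne_zero hs hS h₂,
    self_mem_nhdsWithin] with h hdet₁ hdet₂ hh
  have hinv : h⁻¹ ≠ 0 := inv_ne_zero (ne_of_mem_of_not_mem hh hs)
  rw [log_abs_det_smul hinv hdet₁, log_abs_det_smul hinv hdet₂]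
  ring

end LogDetRate

/-- If `Eᵢ(h) = S h + Dᵢ h² + o(h²)` as `h → 0⁺` with `S` positive-definite, then
`(1/h)(log det E₁(h) − log det E₂(h)) → trace(S⁻¹ (D₁ − D₂))` as `h → 0⁺`. -/
theorem logdet_ratio_rate
    {n : ℕ} (S D₁ D₂ : Matrix (Fin n) (Fin n) ℝ) (hS : S.PosDef)
    (E₁ E₂ : ℝ → Matrix (Fin n) (Fin n) ℝ)
    (h₁ : (fun h : ℝ => E₁ h - h • S - (h ^ 2) • D₁)
      =o[nhdsWithin 0 (Set.Ioi 0)] (fun h : ℝ => h ^ 2))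
    (h₂ : (fun h : ℝ => E₂ h - h • S - (h ^ 2) • D₂)
      =o[nhdsWithin 0 (Set.Ioi 0)] (fun h : ℝ => h ^ 2)) :
    Tendsto (fun h : ℝ => (Real.log (E₁ h).det - Real.log (E₂ h).det) / h)
      (nhdsWithin 0 (Set.Ioi 0)) (nhds (Matrix.trace (S⁻¹ * (D₁ - D₂)))) := by
  simpa only [Real.log_abs] using
    logdet_ratio_rate_general Set.self_notMem_Ioi S D₁ D₂ hS.isUnit E₁ E₂ h₁ h₂
end

section
/- Let n = n1 + n2 + n3 and let A, Σ be n×n real matrices partitioned into 3×3 blocks with multi-index R = (1,2) (so A_RR is the top-left (n1+n2)×(n1+n2) block, A_R3 is (n1+n2)×n3, Σ_3R is n3×(n1+n2), etc.). Assume Σ is symmetric with Σ_RR invertible, and let P be a symmetric n3×n3 matrix satisfying the continuous-time algebraic Riccati equation A_33 P + P A_33^T + Σ_33 = (P A_R3^T + Σ_3R) Σ_RR^{-1} (P A_R3^T + Σ_3R)^T. Define K = (P A_R3^T + Σ_3R) Σ_RR^{-1}, D = (1/2)(A Σ + Σ A^T), and D^R = (1/2)((A_RR + A_R3 K) Σ_RR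 + Σ_RR (A_RR + A_R3 K)^T). Then D^R − D_RR = A_R3 P A_R3^T, and in particular the (1,1) blocks satisfy D^R_{11} − D_{11} = A_13 P A_13^T, so that trace(Σ_11^{-1}(D^R_{11} − D_{11})) = trace(Σ_11^{-1} A_13 P A_13^T). -/
open Matrix

/-!
The gain `K` is built so that `K Σ_RR = P A_R3ᵀ + Σ_3R`. Passing from the block `D_RR` to the
reduced process therefore replaces the cross-covariance `Σ_3R` in `A_R3 Σ_3R + (A_R3 Σ_3R)ᵀ` by
`P A_R3ᵀ + Σ_3R`, and the excess is `A_R3 P A_R3ᵀ` counted twice.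
-/

section Lyapunov

variable {R m n : Type*} [Fintype m] [Fintype n]

/-- The continuous-time Lyapunov operator `A S + S Aᵀ` of a drift matrix `A`, applied to a
covariance matrix `S`. The matrix `D` of the process is half of it. -/
def lyapunov [NonUnitalNonAssocSemiring R] (A S : Matrix m m R) : Matrix m m R :=
  A * S + S * Aᵀ

lemma lyapunov_add_left [NonUnitalNonAssocSemiring R] (A B S : Matrix m m R) :
    lyapunov (A + B) S = lyapunov A S + lyapunov B S := by
  simp only [lyapunov, Matrix.add_mul, transpose_add, Matrix.mul_add]
  abel

lemma toBlocks₁₁_lyapunov_fromBlocks [NonUnitalNonAssocSemiring R]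
    (A₁₁ : Matrix m m R) (A₁₂ : Matrix m n R) (A₂₁ : Matrix n m R) (A₂₂ : Matrix n n R)
    (S₁₁ : Matrix m m R) (S₁₂ : Matrix m n R) (S₂₁ : Matrix n m R) (S₂₂ : Matrix n n R) :
    (lyapunov (fromBlocks A₁₁ A₁₂ A₂₁ A₂₂) (fromBlocks S₁₁ S₁₂ S₂₁ S₂₂)).toBlocks₁₁ =
      lyapunov A₁₁ S₁₁ + (A₁₂ * S₂₁ + S₁₂ * A₁₂ᵀ) := by
  simp only [lyapunov, fromBlocks_transpose, fromBlocks_multiply, fromBlocks_add,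
    toBlocks_fromBlocks₁₁]
  abel

variable [NonUnitalCommSemiring R]

lemma lyapunov_mul_of_isSymm {S : Matrix m m R} (hS : S.IsSymm) (B : Matrix m n R)
    (K : Matrix n m R) : lyapunov (B * K) S = B * (K * S) + (K * S)ᵀ * Bᵀ := by
  simp only [lyapunov, transpose_mul, hS.eq, Matrix.mul_assoc]

lemma lyapunov_add_mul_eq_toBlocks₁₁_add
    (A₁₁ : Matrix m m R) (A₁₂ : Matrix m n R) (A₂₁ : Matrix n m R) (A₂₂ : Matrix n n R)
    {S₁₁ : Matrix m m R} {S₁₂ : Matrix m n R} {S₂₁ : Matrix n m R} (S₂₂ : Matrix n n R)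
    {K : Matrix n m R} {P : Matrix n n R} (hS₁₁ : S₁₁.IsSymm) (hS₂₁ : S₂₁ᵀ = S₁₂)
    (hP : P.IsSymm) (hK : K * S₁₁ = P * A₁₂ᵀ + S₂₁) :
    lyapunov (A₁₁ + A₁₂ * K) S₁₁ =
      (lyapunov (fromBlocks A₁₁ A₁₂ A₂₁ A₂₂) (fromBlocks S₁₁ S₁₂ S₂₁ S₂₂)).toBlocks₁₁ +
        2 • (A₁₂ * P * A₁₂ᵀ) := by
  have gain_contribution : lyapunov (A₁₂ * K) S₁₁ =
      (A₁₂ * S₂₁ + S₁₂ * A₁₂ᵀ) + 2 • (A₁₂ * P * A₁₂ᵀ) := by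
    rw [lyapunov_mul_of_isSymm hS₁₁, hK, transpose_add, transpose_mul, transpose_transpose,
      hP.eq, hS₂₁, Matrix.mul_add, Matrix.add_mul, Matrix.mul_assoc]
    abel
  rw [lyapunov_add_left, gain_contribution, toBlocks₁₁_lyapunov_fromBlocks,
    ← add_assoc]

end Lyapunov

section KalmanGain

variable {R m n : Type*} [CommRing R] [Fintype m] [DecidableEq m] [Fintype n]

/-- The Kalman gain `(P Bᵀ + C) S⁻¹` for observation matrix `B`, error covariance `P`,
cross-covariance `C` of source and observation noise, and observation-noise covariance `S`. -/
noncomputable def kalmanGain (P : Matrix n n R) (B : Matrix m n R) (C : Matrix n m R)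
    (S : Matrix m m R) : Matrix n m R :=
  (P * Bᵀ + C) * S⁻¹

lemma kalmanGain_mul_cancel (P : Matrix n n R) (B : Matrix m n R) (C : Matrix n m R)
    {S : Matrix m m R} (hS : IsUnit S.det) : kalmanGain P B C S * S = P * Bᵀ + C :=
  nonsing_inv_mul_cancel_right S _ hS

end KalmanGain

section ReducedProcess

variable {𝕜 r s : Type*} [Field 𝕜] [NeZero (2 : 𝕜)] [Fintype r] [DecidableEq r] [Fintype s]

lemma half_lyapunov_kalmanGain_sub_toBlocks₁₁
    (ARR : Matrix r r 𝕜) (AR3 : Matrix r s 𝕜) (A3R : Matrix s r 𝕜) (A33 : Matrix s s 𝕜)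
    {SRR : Matrix r r 𝕜} {SR3 : Matrix r s 𝕜} {S3R : Matrix s r 𝕜} {S33 : Matrix s s 𝕜}
    (hS : (fromBlocks SRR SR3 S3R S33).IsSymm) (hSRR : IsUnit SRR.det)
    {P : Matrix s s 𝕜} (hP : P.IsSymm) :
    ((1 : 𝕜) / 2) • lyapunov (ARR + AR3 * kalmanGain P AR3 S3R SRR) SRR -
        (((1 : 𝕜) / 2) • lyapunov (fromBlocks ARR AR3 A3R A33)
          (fromBlocks SRR SR3 S3R S33)).toBlocks₁₁ =
      AR3 * P * AR3ᵀ := by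
  obtain ⟨hSRR_symm, -, hS3R, -⟩ := isSymm_fromBlocks_iff.mp hS
  have half_toBlocks₁₁ (M : Matrix (r ⊕ s) (r ⊕ s) 𝕜) :
      (((1 : 𝕜) / 2) • M).toBlocks₁₁ = ((1 : 𝕜) / 2) • M.toBlocks₁₁ := rfl
  rw [lyapunov_add_mul_eq_toBlocks₁₁_add ARR AR3 A3R A33 S33 hSRR_symm hS3R hP
    (kalmanGain_mul_cancel P AR3 S3R hSRR), half_toBlocks₁₁, smul_add, add_sub_cancel_left,
    ← Nat.cast_smul_eq_nsmul 𝕜, smul_smul, Nat.cast_ofNat, one_div_mul_cancel two_ne_zero,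
    one_smul]

theorem care_reduced_D_identity_general {m n : Type*} [Fintype m] [DecidableEq m] [Fintype n]
    [DecidableEq n]
    (ARR : Matrix (m ⊕ n) (m ⊕ n) 𝕜) (AR3 : Matrix (m ⊕ n) s 𝕜)
    (A3R : Matrix s (m ⊕ n) 𝕜) (A33 : Matrix s s 𝕜)
    {SRR : Matrix (m ⊕ n) (m ⊕ n) 𝕜} {SR3 : Matrix (m ⊕ n) s 𝕜}
    {S3R : Matrix s (m ⊕ n) 𝕜} {S33 : Matrix s s 𝕜}
    (hS : (fromBlocks SRR SR3 S3R S33).IsSymm) (hSRR : IsUnit SRR.det)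
    {P : Matrix s s 𝕜} (hP : P.IsSymm) :
    let D := ((1 : 𝕜) / 2) •
      lyapunov (fromBlocks ARR AR3 A3R A33) (fromBlocks SRR SR3 S3R S33)
    let DR := ((1 : 𝕜) / 2) • lyapunov (ARR + AR3 * kalmanGain P AR3 S3R SRR) SRR
    let A13 : Matrix m s 𝕜 := AR3.submatrix Sum.inl id
    let S11 : Matrix m m 𝕜 := SRR.submatrix Sum.inl Sum.inl
    DR - D.toBlocks₁₁ = AR3 * P * AR3ᵀ ∧
    DR.submatrix Sum.inl Sum.inl - D.toBlocks₁₁.submatrix Sum.inl Sum.inl =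
      A13 * P * A13ᵀ ∧
    trace (S11⁻¹ * (DR.submatrix Sum.inl Sum.inl - D.toBlocks₁₁.submatrix Sum.inl Sum.inl)) =
      trace (S11⁻¹ * (A13 * P * A13ᵀ)) := by
  intro D DR A13 S11
  have hRR : DR - D.toBlocks₁₁ = AR3 * P * AR3ᵀ :=
    half_lyapunov_kalmanGain_sub_toBlocks₁₁ ARR AR3 A3R A33 hS hSRR hP
  have h11 : DR.submatrix Sum.inl Sum.inl - D.toBlocks₁₁.submatrix Sum.inl Sum.inl =
      A13 * P * A13ᵀ :=
    congrArg (fun M ↦ M.submatrix Sum.inl Sum.inl) hRR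
  exact ⟨hRR, h11, by rw [h11]⟩

end ReducedProcess

/-- Algebraic core of the VOU Granger-causality rate formula: if `P` solves the CARE, then
with `K = (P A_R3ᵀ + Σ_3R) Σ_RR⁻¹`, `D = ½(AΣ + ΣAᵀ)` and
`Dᴿ = ½((A_RR + A_R3 K) Σ_RR + Σ_RR (A_RR + A_R3 K)ᵀ)` one has
`Dᴿ − D_RR = A_R3 P A_R3ᵀ`; in particular `Dᴿ₁₁ − D₁₁ = A₁₃ P A₁₃ᵀ` and
`trace(Σ₁₁⁻¹ (Dᴿ₁₁ − D₁₁)) = trace(Σ₁₁⁻¹ A₁₃ P A₁₃ᵀ)`. -/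
theorem care_reduced_D_identity
    {n1 n2 n3 : ℕ}
    (ARR : Matrix (Fin n1 ⊕ Fin n2) (Fin n1 ⊕ Fin n2) ℝ)
    (AR3 : Matrix (Fin n1 ⊕ Fin n2) (Fin n3) ℝ)
    (A3R : Matrix (Fin n3) (Fin n1 ⊕ Fin n2) ℝ)
    (A33 : Matrix (Fin n3) (Fin n3) ℝ)
    (SRR : Matrix (Fin n1 ⊕ Fin n2) (Fin n1 ⊕ Fin n2) ℝ)
    (SR3 : Matrix (Fin n1 ⊕ Fin n2) (Fin n3) ℝ)
    (S3R : Matrix (Fin n3) (Fin n1 ⊕ Fin n2) ℝ)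
    (S33 : Matrix (Fin n3) (Fin n3) ℝ)
    (A Sig : Matrix ((Fin n1 ⊕ Fin n2) ⊕ Fin n3) ((Fin n1 ⊕ Fin n2) ⊕ Fin n3) ℝ)
    (hA : A = Matrix.fromBlocks ARR AR3 A3R A33)
    (hSig : Sig = Matrix.fromBlocks SRR SR3 S3R S33)
    (hSsymm : Sig.IsSymm) (hSRR : IsUnit SRR.det)
    (P : Matrix (Fin n3) (Fin n3) ℝ) (hPsymm : Pᵀ = P)
    (hCARE : A33 * P + P * A33ᵀ + S33
      = (P * AR3ᵀ + S3R) * SRR⁻¹ * (P * AR3ᵀ + S3R)ᵀ)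
    (K : Matrix (Fin n3) (Fin n1 ⊕ Fin n2) ℝ)
    (hK : K = (P * AR3ᵀ + S3R) * SRR⁻¹)
    (D : Matrix ((Fin n1 ⊕ Fin n2) ⊕ Fin n3) ((Fin n1 ⊕ Fin n2) ⊕ Fin n3) ℝ)
    (hD : D = ((1 : ℝ) / 2) • (A * Sig + Sig * Aᵀ))
    (DR : Matrix (Fin n1 ⊕ Fin n2) (Fin n1 ⊕ Fin n2) ℝ)
    (hDR : DR = ((1 : ℝ) / 2) • ((ARR + AR3 * K) * SRR + SRR * (ARR + AR3 * K)ᵀ))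
    (A13 : Matrix (Fin n1) (Fin n3) ℝ) (hA13 : A13 = AR3.submatrix Sum.inl id)
    (S11 : Matrix (Fin n1) (Fin n1) ℝ) (hS11 : S11 = SRR.submatrix Sum.inl Sum.inl) :
    DR - D.toBlocks₁₁ = AR3 * P * AR3ᵀ ∧
    DR.submatrix Sum.inl Sum.inl - D.toBlocks₁₁.submatrix Sum.inl Sum.inl
      = A13 * P * A13ᵀ ∧
    Matrix.trace (S11⁻¹ *
        (DR.submatrix Sum.inl Sum.inl - D.toBlocks₁₁.submatrix Sum.inl Sum.inl))
      = Matrix.trace (S11⁻¹ * (A13 * P * A13ᵀ)) := by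
  subst hA hSig hK hD hDR hA13 hS11
  exact care_reduced_D_identity_general ARR AR3 A3R A33 hSsymm hSRR hPsymm
end
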